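/- Let G be a branch group acting on a rooted tree T and let H be a subgroup of finite index in G. Then every finite normal subgroup of H is trivial. -/

import Mathlib

/-!  Common definitions: rooted trees of type `(m n)`, tree automorphisms,
rigid stabilizers, branch groups, and auxiliary notions. -/

universe u

/-- Vertices of the rooted tree of type `m`: finite sequences `(x_0, …, x_{n-1})`
with `x_i ∈ {1, …, m i}` (encoded as `Fin (m i)`). -/
def Vertex (m : ℕ → ℕ) : Type := Σ n : ℕ, ∀ i : Fin n, Fin (m i)

namespace Vertex

variable {m : ℕ → ℕ}

/-- The level of a vertex: its length. -/
def level (v : Vertex m) : ℕ := v.1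

/-- `v` is a (weak) prefix of `w`; i.e. `w` lies in the subtree `T_v`
(`w = v` or `w` is a descendant of `v`). -/
def IsPrefix (v w : Vertex m) : Prop :=
  ∃ h : v.1 ≤ w.1, ∀ i : Fin v.1, w.2 (Fin.castLE h i) = v.2 i

/-- `w` is a child (one-step extension) of `v`. -/
def IsChild (v w : Vertex m) : Prop := w.1 = v.1 + 1 ∧ IsPrefix v w

end Vertex

/-- The `n`-th layer `L_n` of the tree: all vertices of level `n`. -/
def layer (m : ℕ → ℕ) (n : ℕ) : Set (Vertex m) := {v | v.1 = n}

section Rist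

variable {m : ℕ → ℕ} (G : Type*) [Group G] [MulAction G (Vertex m)]

/-- The rigid stabilizer of a vertex `v`: all elements fixing every vertex
outside the subtree `T_v`. -/
def rist (v : Vertex m) : Subgroup G :=
  ⨅ w ∈ {w : Vertex m | ¬ Vertex.IsPrefix v w}, MulAction.stabilizer G w

/-- The subgroup generated by the rigid stabilizers of the vertices in `X`. -/
def ristSet (X : Set (Vertex m)) : Subgroup G := ⨆ v ∈ X, rist G v

/-- `rist_G(n)`, the rigid stabilizer of the `n`-th layer. -/
def ristLayer (m : ℕ → ℕ) (G : Type*) [Group G] [MulAction G (Vertex m)] (n : ℕ) :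
    Subgroup G :=
  ristSet G (layer m n)

/-- The orbit of the vertex `v` under a subgroup `H ≤ G`. -/
def subOrbit (H : Subgroup G) (v : Vertex m) : Set (Vertex m) :=
  {w | ∃ h ∈ H, h • v = w}

/-- The set of orbits of a subgroup `H ≤ G` on a set `X` of vertices. -/
def orbitsOn (H : Subgroup G) (X : Set (Vertex m)) : Set (Set (Vertex m)) :=
  (fun v => subOrbit G H v) '' X

end Rist

/-- `G` is a branch group on the rooted tree of type `m` (with respect to the given
action): the action is faithful and by tree automorphisms, `G` acts transitively on
each layer, and each `rist_G(n)` has finite index in `G`. -/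
structure IsBranchGroup (m : ℕ → ℕ) (G : Type*) [Group G] [MulAction G (Vertex m)] :
    Prop where
  faithful : ∀ g : G, (∀ v : Vertex m, g • v = v) → g = 1
  aut : ∀ (g : G) (v w : Vertex m), Vertex.IsChild v w ↔ Vertex.IsChild (g • v) (g • w)
  trans : ∀ v w : Vertex m, v.1 = w.1 → ∃ g : G, g • v = w
  ristFiniteIndex : ∀ n : ℕ, (ristLayer m G n).FiniteIndex

/-- A group is virtually soluble if it has a soluble subgroup of finite index. -/
def VirtuallySolvable (Γ : Type*) [Group Γ] : Prop :=
  ∃ S : Subgroup Γ, S.FiniteIndex ∧ IsSolvable ↥S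

/-- A group is virtually abelian if it has an abelian subgroup of finite index. -/
def VirtuallyAbelian (Γ : Type*) [Group Γ] : Prop :=
  ∃ S : Subgroup Γ, S.FiniteIndex ∧ ∀ a ∈ S, ∀ b ∈ S, a * b = b * a

/-- For subgroups `A ≤ B` of a group with `A` normalised by `B`, this says that the
factor `B/A` belongs to the class `𝔛`. -/
def FactorIn (𝔛 : (Γ : Type u) → [inst : Group Γ] → Prop) {G : Type u} [Group G]
    (A B : Subgroup G) : Prop :=
  ∃ hn : (A.subgroupOf B).Normal, letI := hn; 𝔛 (↥B ⧸ A.subgroupOf B)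

/-- The factor `B/A` is virtually soluble. -/
def FactorVirtuallySolvable {G : Type*} [Group G] (A B : Subgroup G) : Prop :=
  ∃ hn : (A.subgroupOf B).Normal,
    letI := hn; VirtuallySolvable (↥B ⧸ A.subgroupOf B)

/-- The factor `B/A` is virtually abelian. -/
def FactorVirtuallyAbelian {G : Type*} [Group G] (A B : Subgroup G) : Prop :=
  ∃ hn : (A.subgroupOf B).Normal,
    letI := hn; VirtuallyAbelian (↥B ⧸ A.subgroupOf B)

/-- `Γ` has `r` infinite normal subgroups that generate their direct product in `Γ`:
each of them intersects trivially the subgroup generated by the others. -/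
def HasIndepFamily (Γ : Type*) [Group Γ] (r : ℕ) : Prop :=
  ∃ N : Fin r → Subgroup Γ, (∀ i, (N i).Normal) ∧ (∀ i, Infinite ↥(N i)) ∧
    ∀ i, N i ⊓ (⨆ j ∈ ({i}ᶜ : Set (Fin r)), N j) = ⊥

namespace BranchAux

variable {m : ℕ → ℕ}

lemma pre_refl (v : Vertex m) : v.IsPrefix v := ⟨le_rfl, fun _ => rfl⟩

lemma pre_trans {u v w : Vertex m} (h : u.IsPrefix v) (h' : v.IsPrefix w) : u.IsPrefix w := by
  obtain ⟨a, ha⟩ := h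
  obtain ⟨b, hb⟩ := h'
  refine ⟨a.trans b, fun i => ?_⟩
  rw [← ha i, ← hb]
  rfl

lemma pre_eq {u v w : Vertex m} (hl : u.1 = v.1) (h : u.IsPrefix w) (h' : v.IsPrefix w) :
    u = v := by
  obtain ⟨n, x⟩ := u
  obtain ⟨n', y⟩ := v
  obtain rfl : n = n' := hl
  obtain ⟨a, ha⟩ := h
  obtain ⟨b, hb⟩ := h'
  have : x = y := by
    funext i
    exact (ha i).symm.trans (hb i)
  rw [this]

/-- Truncation of a nonroot vertex. -/
lemma parent {w : Vertex m} {n : ℕ} (h : w.1 = n + 1) :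
    ∃ w' : Vertex m, w'.1 = n ∧ w'.IsChild w := by
  obtain ⟨k, x⟩ := w
  obtain rfl : k = n + 1 := h
  exact ⟨⟨n, fun i => x (Fin.castLE (Nat.le_succ n) i)⟩, rfl, rfl, Nat.le_succ n, fun _ => rfl⟩

lemma pre_parent {v w w' : Vertex m} (h : v.IsPrefix w) (hw : w'.IsChild w)
    (hl : v.1 ≤ w'.1) : v.IsPrefix w' := by
  obtain ⟨a, ha⟩ := h
  obtain ⟨_, b, hb⟩ := hw
  refine ⟨hl, fun i => ?_⟩
  rw [← ha i, ← hb]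
  rfl

variable {G : Type*} [Group G] [MulAction G (Vertex m)]

lemma level_smul (hG : IsBranchGroup m G) (n : ℕ) :
    ∀ (g : G) (v : Vertex m), v.1 = n → (g • v).1 = n := by
  induction n with
  | zero =>
    intro g v hv
    by_contra hne
    obtain ⟨k, hk⟩ := Nat.exists_eq_succ_of_ne_zero hne
    obtain ⟨w, -, hw⟩ := parent hk
    have := (hG.aut g⁻¹ _ _).1 hw
    rw [inv_smul_smul] at this
    have := this.1
    omega
  | succ n ih =>
    intro g v hv
    obtain ⟨w, hw, hc⟩ := parent hv
    have := ((hG.aut g _ _).1 hc).1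
    rw [this, ih g w hw]

lemma pre_smul (hG : IsBranchGroup m G) (g : G) (v : Vertex m) (n : ℕ) :
    ∀ w : Vertex m, w.1 = n → v.IsPrefix w → (g • v).IsPrefix (g • w) := by
  induction n with
  | zero =>
    intro w hw h
    have : v = w := pre_eq (by have := h.1; omega) h (pre_refl w)
    rw [this]; exact pre_refl _
  | succ n ih =>
    intro w hw h
    by_cases hl : v.1 = n + 1
    · have : v = w := pre_eq (by omega) h (pre_refl w)
      rw [this]; exact pre_refl _
    · obtain ⟨w', hw', hc⟩ := parent hw
      have h1 := ih w' hw' (pre_parent h hc (by have := h.1; omega))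
      exact pre_trans h1 ((hG.aut g _ _).1 hc).2

lemma mem_rist {v : Vertex m} {r : G} :
    r ∈ rist G v ↔ ∀ w, ¬ v.IsPrefix w → r • w = w := by
  simp [rist, Subgroup.mem_iInf]

lemma rist_pre {v w : Vertex m} {r : G} (hr : r ∈ rist G v) (h : v.IsPrefix w) :
    v.IsPrefix (r • w) := by
  by_contra hn
  have h1 := mem_rist.1 hr _ hn
  have h2 : r • w = w := MulAction.injective r h1
  rw [h2] at hn
  exact hn h

lemma commute_rist (hG : IsBranchGroup m G) {u v : Vertex m} (hl : u.1 = v.1) (hne : u ≠ v)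
    {r s : G} (hr : r ∈ rist G u) (hs : s ∈ rist G v) : Commute r s := by
  have key : ∀ w : Vertex m, r • s • w = s • r • w := by
    intro w
    by_cases hu : u.IsPrefix w
    · have h1 : ¬ v.IsPrefix w := fun h => hne (pre_eq hl hu h)
      have h2 : ¬ v.IsPrefix (r • w) := fun h => hne (pre_eq hl (rist_pre hr hu) h)
      rw [mem_rist.1 hs _ h1, mem_rist.1 hs _ h2]
    · rw [mem_rist.1 hr _ hu]
      by_cases hv : v.IsPrefix w
      · exact mem_rist.1 hr _ fun h => hne (pre_eq hl h (rist_pre hs hv))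
      · rw [mem_rist.1 hs _ hv, mem_rist.1 hr _ hu]
  have : (s * r)⁻¹ * (r * s) = 1 := hG.faithful _ fun w => by
    rw [mul_smul, mul_smul r, key, ← mul_smul s, inv_smul_smul]
  exact (inv_mul_eq_one.1 this).symm

lemma conj_rist (hG : IsBranchGroup m G) {v : Vertex m} (g : G) {r : G}
    (hr : r ∈ rist G (g • v)) : g⁻¹ * r * g ∈ rist G v := by
  refine mem_rist.2 fun w hw => ?_
  rw [mul_smul, mul_smul, mem_rist.1 hr, inv_smul_smul]
  intro h
  have := pre_smul hG g⁻¹ _ _ _ rfl h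
  rw [inv_smul_smul, inv_smul_smul] at this
  exact hw this

lemma infinite_G (hm : ∀ n, 2 ≤ m n) (hG : IsBranchGroup m G) : Infinite G := by
  by_contra hinf
  have : Finite G := not_infinite_iff_finite.1 hinf
  let n := Nat.card G
  let x : ∀ i : Fin n, Fin (m i) := fun i => ⟨0, by have := hm i; omega⟩
  choose f hf using fun y : (∀ i : Fin n, Fin (m i)) =>
    hG.trans (⟨n, x⟩ : Vertex m) ⟨n, y⟩ rfl
  have hinj : Function.Injective f := by
    intro y z h
    have h1 := hf y
    rw [h, hf z] at h1
    have := (Sigma.mk.inj_iff.1 h1).2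
    exact (eq_of_heq this).symm
  have h1 := Nat.card_le_card_of_injective f hinj
  rw [Nat.card_eq_fintype_card, Fintype.card_pi] at h1
  have h2 : ∏ i : Fin n, 2 ≤ ∏ i : Fin n, Fintype.card (Fin (m i)) :=
    Finset.prod_le_prod' fun i _ => by simpa using hm i
  rw [Finset.prod_const, Finset.card_univ, Fintype.card_fin] at h2
  have h3 : n < 2 ^ n := Nat.lt_two_pow_self
  have : n = Nat.card G := rfl
  omega

lemma finite_of_finite_finiteIndex {A : Type*} [Group A] (B : Subgroup A) [B.FiniteIndex]
    [Finite B] : Finite A := by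
  have h := B.card_mul_index
  have h1 : Nat.card B ≠ 0 := Nat.card_pos.ne'
  have h2 := Subgroup.FiniteIndex.index_ne_zero (H := B)
  exact Nat.finite_of_card_ne_zero (h ▸ mul_ne_zero h1 h2)

lemma infinite_rist (hm : ∀ n, 2 ≤ m n) (hG : IsBranchGroup m G) (v : Vertex m) :
    ¬ Finite (rist G v) := by
  intro hfin
  have hall : ∀ x : (∀ i : Fin v.1, Fin (m i)), Finite (rist G (⟨v.1, x⟩ : Vertex m)) := by
    intro x
    obtain ⟨g, hg⟩ := hG.trans v ⟨v.1, x⟩ rfl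
    rw [← hg]
    refine Finite.of_injective
      (fun r : rist G (g • v) => (⟨g⁻¹ * r * g, conj_rist hG g r.2⟩ : rist G v)) ?_
    intro r s h
    simpa using h
  have hcomm : Pairwise fun x y : (∀ i : Fin v.1, Fin (m i)) =>
      ∀ a b : G, a ∈ rist G (⟨v.1, x⟩ : Vertex m) → b ∈ rist G (⟨v.1, y⟩ : Vertex m) →
        Commute a b := by
    intro x y hxy a b ha hb
    refine commute_rist hG (u := ⟨v.1, x⟩) (v := ⟨v.1, y⟩) rfl ?_ ha hb
    intro h
    exact hxy (eq_of_heq (Sigma.mk.inj_iff.1 h).2)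
  have hr := Subgroup.noncommPiCoprod_range (H := fun x : (∀ i : Fin v.1, Fin (m i)) =>
    rist G (⟨v.1, x⟩ : Vertex m)) (hcomm := hcomm)
  have heq : ristLayer m G v.1 = ⨆ x : (∀ i : Fin v.1, Fin (m i)), rist G (⟨v.1, x⟩ : Vertex m) := by
    apply le_antisymm
    · refine iSup₂_le ?_
      rintro ⟨k, x⟩ hk
      have hk' : k = v.1 := hk
      subst hk'
      exact le_iSup (fun x : (∀ i : Fin v.1, Fin (m i)) => rist G (⟨v.1, x⟩ : Vertex m)) x
    · exact iSup_le fun x => le_iSup₂_of_le (⟨v.1, x⟩ : Vertex m) rfl le_rfl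
  have hf : Finite (ristLayer m G v.1) := by
    rw [heq, ← hr]
    exact Finite.of_surjective _ (MonoidHom.rangeRestrict_surjective _)
  have := hG.ristFiniteIndex v.1
  have hGf := finite_of_finite_finiteIndex (ristLayer m G v.1)
  exact (infinite_G hm hG).not_finite hGf

end BranchAux

open BranchAux in
/-- **Lemma.** If `G` is a branch group on `T` and `H ≤ G` has finite index, then every
finite normal subgroup of `H` is trivial. -/
theorem finite_normal_subgroup_trivial
    (m : ℕ → ℕ) (hm : ∀ n, 2 ≤ m n)
    (G : Type*) [Group G] [MulAction G (Vertex m)] (hG : IsBranchGroup m G)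
    (H : Subgroup G) [H.FiniteIndex]
    (K : Subgroup G) (hKH : K ≤ H) (hKn : ∀ h ∈ H, ∀ k ∈ K, h * k * h⁻¹ ∈ K)
    (hfin : Finite ↥K) :
    K = ⊥ := by
  rw [Subgroup.eq_bot_iff_forall]
  intro k hk
  by_contra hk1
  obtain ⟨v, hv⟩ : ∃ v : Vertex m, k • v ≠ v := by
    by_contra! h
    exact hk1 (hG.faithful k h)
  have triv : ∀ r ∈ rist G v, r * k = k * r → r = 1 := by
    intro r hr hc
    refine hG.faithful r fun w => ?_
    by_cases hw : v.IsPrefix w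
    · have h1 : ¬ v.IsPrefix (k⁻¹ • w) := by
        intro h
        have h2 := pre_smul hG k _ _ _ rfl h
        rw [smul_inv_smul] at h2
        exact hv (pre_eq (level_smul hG _ k v rfl) h2 hw)
      have h3 := mem_rist.1 hr _ h1
      have h4 : r • w = (r * k) • k⁻¹ • w := by rw [mul_smul, smul_inv_smul]
      rw [h4, hc, mul_smul, h3, smul_inv_smul]
    · exact mem_rist.1 hr w hw
  have hf : Finite (H.subgroupOf (rist G v)) := by
    refine Finite.of_injective
      (fun r : H.subgroupOf (rist G v) =>
        (⟨(r : rist G v) * k * ((r : rist G v) : G)⁻¹, hKn _ r.2 k hk⟩ : K)) ?_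
    rintro ⟨⟨r, hr⟩, hrH⟩ ⟨⟨s, hs⟩, hsH⟩ h
    have h' : r * k * r⁻¹ = s * k * s⁻¹ := congrArg Subtype.val h
    have := triv (s⁻¹ * r) (mul_mem (inv_mem hs) hr) (by
      calc s⁻¹ * r * k = s⁻¹ * (r * k * r⁻¹) * r := by group
        _ = k * (s⁻¹ * r) := by rw [h']; group)
    have hsr : s = r := inv_mul_eq_one.1 this
    subst hsr
    rfl
  exact infinite_rist hm hG v (finite_of_finite_finiteIndex (H.subgroupOf (rist G v)))
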